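/- arXiv:2509.06416 — 2 statements merged into one kernel-verified Lean document; each statement's English description precedes it below -/
import Mathlib

section
/- Let (X, f_{1,∞}) be an NDS such that the compositions (f_r^k) converge collectively to the iterates (f^k) of a continuous map f : X → X. If f_{1,∞} is feeble open and Δ-transitive, then f is Δ-transitive (i.e., for every m ∈ ℕ there exists a dense Gδ set Y ⊆ X such that for every x ∈ Y the set {(f^n(x), f^{2n}(x), …, f^{mn}(x)) : n ∈ ℕ} is dense in X^m). -/
open Set Filter

section NDSDefs

variable {X : Type*}

/-- `nComp f i n` is the composition `f (i+n-1) ∘ ⋯ ∘ f (i+1) ∘ f i`.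
Here `f` is the 0-indexed sequence of maps of the NDS (so `f 0` is the paper's `f₁`),
and `nComp f 0 n` is the paper's `f₁ⁿ`. -/
def nComp (f : ℕ → X → X) (i : ℕ) : ℕ → X → X
  | 0 => id
  | n + 1 => f (i + n) ∘ nComp f i n

/-- The `k`-th iterate NDS `f^{[k]}`: its `n`-th map (0-indexed) is `f_{kn+1}^{k}`
in the paper's notation, i.e. the composition of `k` maps of `f` starting at index `k*n`. -/
def iterNDS (f : ℕ → X → X) (k : ℕ) : ℕ → X → X :=
  fun n => nComp f (k * n) k

/-- The product NDS `f^{[a]} = f^{[a 0]} × ⋯ × f^{[a (r-1)]}` on `Fin r → X`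
for a vector `a : Fin r → ℕ`. -/
def vecIter (f : ℕ → X → X) {r : ℕ} (a : Fin r → ℕ) : ℕ → (Fin r → X) → Fin r → X :=
  fun n x i => iterNDS f (a i) n (x i)

section Topo

variable [TopologicalSpace X]

/-- Topological transitivity of an NDS. -/
def NDSTransitive (f : ℕ → X → X) : Prop :=
  ∀ U V : Set X, IsOpen U → U.Nonempty → IsOpen V → V.Nonempty →
    ∃ n : ℕ, 1 ≤ n ∧ (nComp f 0 n '' U ∩ V).Nonempty

/-- Multi-transitivity of an NDS. -/
def MultiTransitive (f : ℕ → X → X) : Prop :=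
  ∀ m : ℕ, 1 ≤ m → ∀ U V : Fin m → Set X,
    (∀ i, IsOpen (U i)) → (∀ i, (U i).Nonempty) →
    (∀ i, IsOpen (V i)) → (∀ i, (V i).Nonempty) →
    ∃ l : ℕ, 1 ≤ l ∧ ∀ i : Fin m, (nComp f 0 ((i.1 + 1) * l) '' U i ∩ V i).Nonempty

/-- Multi-transitivity of an NDS with respect to a vector `a`. -/
def MultiTransWrt (f : ℕ → X → X) {p : ℕ} (a : Fin p → ℕ) : Prop :=
  ∀ U V : Fin p → Set X,
    (∀ i, IsOpen (U i)) → (∀ i, (U i).Nonempty) →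
    (∀ i, IsOpen (V i)) → (∀ i, (V i).Nonempty) →
    ∃ l : ℕ, 1 ≤ l ∧ ∀ i : Fin p, (nComp f 0 (a i * l) '' U i ∩ V i).Nonempty

/-- Strong multi-transitivity of an NDS: multi-transitivity with respect to every
vector of positive integers. -/
def StronglyMultiTransitive (f : ℕ → X → X) : Prop :=
  ∀ p : ℕ, 1 ≤ p → ∀ a : Fin p → ℕ, (∀ i, 1 ≤ a i) → MultiTransWrt f a

/-- Weak mixing of order `n` of an NDS. -/
def WeaklyMixingOfOrder (f : ℕ → X → X) (n : ℕ) : Prop :=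
  ∀ U V : Fin n → Set X,
    (∀ i, IsOpen (U i)) → (∀ i, (U i).Nonempty) →
    (∀ i, IsOpen (V i)) → (∀ i, (V i).Nonempty) →
    ∃ m : ℕ, 1 ≤ m ∧ ∀ i : Fin n, (nComp f 0 m '' U i ∩ V i).Nonempty

/-- Weak mixing of all orders of an NDS. -/
def WeaklyMixingAllOrders (f : ℕ → X → X) : Prop :=
  ∀ n : ℕ, 2 ≤ n → WeaklyMixingOfOrder f n

/-- Mild mixing of an NDS: the product with any transitive NDS (on a compact
metric space, with continuous maps) is transitive. -/
def MildlyMixing (f : ℕ → X → X) : Prop :=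
  ∀ (Y : Type) [MetricSpace Y] [CompactSpace Y] (g : ℕ → Y → Y),
    (∀ n, Continuous (g n)) → NDSTransitive g →
      NDSTransitive (fun n (p : X × Y) => (f n p.1, g n p.2))

/-- Δ-transitivity of an NDS. -/
def DeltaTransitive (f : ℕ → X → X) : Prop :=
  ∀ m : ℕ, 1 ≤ m → ∃ Y : Set X, Dense Y ∧ IsGδ Y ∧
    ∀ x ∈ Y, Dense {y : Fin m → X | ∃ n : ℕ, 1 ≤ n ∧ y = fun i => nComp f 0 ((i.1 + 1) * n) x}

/-- Δ-mixing of an NDS. -/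
def DeltaMixing (f : ℕ → X → X) : Prop :=
  ∀ m : ℕ, 1 ≤ m → ∀ A : Set ℕ, A.Infinite → 0 ∉ A →
    ∃ Y : Set X, Dense Y ∧ IsGδ Y ∧
      ∀ x ∈ Y, Dense {y : Fin m → X | ∃ n ∈ A, y = fun i => nComp f 0 ((i.1 + 1) * n) x}

/-- The set `N_{f_{1,∞}}(U,V)` of (positive) hitting times. -/
def hitTimes (f : ℕ → X → X) (U V : Set X) : Set ℕ :=
  {n : ℕ | 1 ≤ n ∧ (nComp f 0 n '' U ∩ V).Nonempty}

/-- A set of positive integers is syndetic if it has bounded gaps. -/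
def Syndetic (A : Set ℕ) : Prop :=
  ∃ M : ℕ, ∀ i : ℕ, 1 ≤ i → ∃ j ∈ A, i ≤ j ∧ j ≤ i + M

/-- A set of positive integers is thick if it contains arbitrarily long runs. -/
def ThickSet (A : Set ℕ) : Prop :=
  ∀ p : ℕ, ∃ n : ℕ, 1 ≤ n ∧ ∀ j ≤ p, n + j ∈ A

/-- A set of positive integers is thickly syndetic. -/
def ThicklySyndetic (A : Set ℕ) : Prop :=
  ∀ l : ℕ, Syndetic {m : ℕ | ∀ j ≤ l, m + j ∈ A}

/-- Thick transitivity of an NDS. -/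
def ThicklyTransitive (f : ℕ → X → X) : Prop :=
  ∀ U V : Set X, IsOpen U → U.Nonempty → IsOpen V → V.Nonempty →
    ThickSet (hitTimes f U V)

/-- Thickly syndetic transitivity of an NDS. -/
def ThicklySyndeticallyTransitive (f : ℕ → X → X) : Prop :=
  ∀ U V : Set X, IsOpen U → U.Nonempty → IsOpen V → V.Nonempty →
    ThicklySyndetic (hitTimes f U V)

/-- Total transitivity of an NDS: every iterate `f^{[n]}` is transitive. -/
def TotallyTransitive (f : ℕ → X → X) : Prop :=
  ∀ n : ℕ, 1 ≤ n → NDSTransitive (iterNDS f n)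

/-- An NDS is feeble open if each map sends nonempty open sets to sets with
nonempty interior. -/
def FeebleOpen (f : ℕ → X → X) : Prop :=
  ∀ i : ℕ, ∀ U : Set X, IsOpen U → U.Nonempty → (interior (f i '' U)).Nonempty

/-- Strong multi-transitivity of an autonomous system `(X, g)`. -/
def ADSStronglyMultiTransitive (g : X → X) : Prop :=
  ∀ m : ℕ, 1 ≤ m → ∀ a : Fin m → ℕ, (∀ j, 1 ≤ a j) →
    ∀ U V : Fin m → Set X,
      (∀ j, IsOpen (U j)) → (∀ j, (U j).Nonempty) →
      (∀ j, IsOpen (V j)) → (∀ j, (V j).Nonempty) →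
      ∃ l : ℕ, 1 ≤ l ∧ ∀ j : Fin m, (g^[a j * l] '' U j ∩ V j).Nonempty

/-- Δ-transitivity of an autonomous system `(X, g)`. -/
def ADSDeltaTransitive (g : X → X) : Prop :=
  ∀ m : ℕ, 1 ≤ m → ∃ Y : Set X, Dense Y ∧ IsGδ Y ∧
    ∀ x ∈ Y, Dense {y : Fin m → X | ∃ n : ℕ, 1 ≤ n ∧ y = fun i => g^[(i.1 + 1) * n] x}

/-- Thickly syndetic transitivity of an autonomous system `(X, g)`. -/
def ADSThicklySyndeticallyTransitive (g : X → X) : Prop :=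
  ∀ U V : Set X, IsOpen U → U.Nonempty → IsOpen V → V.Nonempty →
    ThicklySyndetic {n : ℕ | 1 ≤ n ∧ (g^[n] '' U ∩ V).Nonempty}

end Topo

section MetricDefs

variable [MetricSpace X]

/-- The compositions `f_r^k` converge collectively to the iterates `g^k`. -/
def CollectiveConvergence (f : ℕ → X → X) (g : X → X) : Prop :=
  ∀ ε : ℝ, 0 < ε → ∃ r₀ : ℕ, ∀ r ≥ r₀, ∀ k : ℕ, 1 ≤ k → ∀ x : X,
    dist (nComp f r k x) (g^[k] x) < ε

/-- Chain mixing of an NDS. -/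
def NDSChainMixing (f : ℕ → X → X) : Prop :=
  ∀ x y : X, ∀ δ : ℝ, 0 < δ → ∃ N : ℕ, 1 ≤ N ∧ ∀ n ≥ N,
    ∃ c : ℕ → X, c 0 = x ∧ c n = y ∧ ∀ i < n, dist (f i (c i)) (c (i + 1)) < δ

/-- Chain transitivity of an NDS. -/
def NDSChainTransitive (f : ℕ → X → X) : Prop :=
  ∀ x y : X, ∀ δ : ℝ, 0 < δ → ∃ n : ℕ, 1 ≤ n ∧
    ∃ c : ℕ → X, c 0 = x ∧ c n = y ∧ ∀ i < n, dist (f i (c i)) (c (i + 1)) < δ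

/-- The shadowing property of an NDS. -/
def NDSShadowing (f : ℕ → X → X) : Prop :=
  ∀ ε : ℝ, 0 < ε → ∃ δ : ℝ, 0 < δ ∧ ∀ n : ℕ, ∀ c : ℕ → X,
    (∀ i < n, dist (f i (c i)) (c (i + 1)) < δ) →
      ∃ z : X, ∀ i ≤ n, dist (nComp f 0 i z) (c i) < ε

end MetricDefs

end NDSDefs

/-!
A dense orbit `n ↦ (f₁ⁿ z, f₁²ⁿ z, …, f₁^((m+1)n) z)` enters `U × V`, with `V ⊆ X^m`, at
arbitrarily large times `n`. For such `n` the point `x = f₁ⁿ z` lies in `U`, and its images under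
the compositions of lengths `n, 2n, …, mn` starting at `f_{n+1}` form a point of `V`. For large `n`
these compositions are uniformly close to the iterates of the limit map `f`, so the open set of `x`
with `(fⁿ x, …, f^(mn) x) ∈ V` for some `n ≥ 1` is dense. Intersect these sets over a countable
basis of `X^m`, which exists because a space with a dense orbit is separable.
-/

theorem nComp_add {X : Type*} (f : ℕ → X → X) (i a b : ℕ) :
    nComp f i (a + b) = nComp f (i + a) b ∘ nComp f i a := by
  induction b with
  | zero => rfl
  | succ b ih => rw [← add_assoc, nComp, nComp, ih, add_assoc, Function.comp_assoc]

theorem eventually_residual_denseRange {ι X Z : Type*} [TopologicalSpace X] [TopologicalSpace Z]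
    [SecondCountableTopology Z] {T : ι → X → Z} (hT : ∀ i, Continuous (T i))
    (hdense : ∀ V : Set Z, IsOpen V → V.Nonempty → Dense (⋃ i, T i ⁻¹' V)) :
    ∀ᶠ x in residual X, DenseRange fun i => T i x := by
  have hB := TopologicalSpace.isBasis_countableBasis Z
  have hmeets : ∀ᶠ x in residual X, ∀ V ∈ TopologicalSpace.countableBasis Z,
      x ∈ ⋃ i, T i ⁻¹' V :=
    (eventually_countable_ball (TopologicalSpace.countable_countableBasis Z)).2 fun V hV =>
      residual_of_dense_open (isOpen_iUnion fun i => (hB.isOpen hV).preimage (hT i))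
        (hdense V (hB.isOpen hV) (TopologicalSpace.nonempty_of_mem_countableBasis hV))
  filter_upwards [hmeets] with x hx
  refine hB.dense_iff.2 fun V hV _ => ?_
  obtain ⟨i, hi⟩ := mem_iUnion.1 (hx V hV)
  exact ⟨T i x, hi, mem_range_self i⟩

theorem exists_ge_castAdd_mem_of_denseRange {X : Type*} [TopologicalSpace X] [T1Space X]
    {k L : ℕ} {T : ℕ → Fin (k + L) → X} (hT : DenseRange T)
    {V : Set (Fin k → X)} (hV : IsOpen V) (hVne : V.Nonempty) :
    ∃ n ≥ L, (fun i => T n (Fin.castAdd L i)) ∈ V := by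
  obtain ⟨v, hv⟩ := hVne
  rcases subsingleton_or_nontrivial X with _ | _
  · exact ⟨L, le_rfl, by rwa [Subsingleton.elim (fun i => T L (Fin.castAdd L i)) v]⟩
  -- `V` may contain isolated points, visited only once, so density in `V` alone gives no late
  -- visit: the `j`-th extra coordinate is spent on ruling out the time `j`.
  let W : Set (Fin (k + L) → X) :=
    {y | (fun i => y (Fin.castAdd L i)) ∈ V} ∩
      ⋂ j : Fin L, {y | y (Fin.natAdd k j) ≠ T j (Fin.natAdd k j)}
  have hW : IsOpen W := (hV.preimage (by fun_prop)).inter <|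
    isOpen_iInter_of_finite fun j => isOpen_ne.preimage (continuous_apply (Fin.natAdd k j))
  have hWne : W.Nonempty := by
    choose w hw using fun j : Fin L => exists_ne (T j (Fin.natAdd k j))
    exact ⟨Fin.append v w, by simpa [W] using ⟨hv, hw⟩⟩
  obtain ⟨n, hnV, hn⟩ := hT.exists_mem_open hW hWne
  exact ⟨n, not_lt.1 fun hnL => mem_iInter.1 hn ⟨n, hnL⟩ rfl, hnV⟩

namespace DeltaTransitive

variable {X : Type*} [TopologicalSpace X] {f : ℕ → X → X}

theorem exists_denseRange_nComp [Nonempty X] (hf : DeltaTransitive f) {m : ℕ} (hm : 1 ≤ m) :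
    ∃ z, DenseRange fun (n : ℕ) (i : Fin m) => nComp f 0 ((i.1 + 1) * n) z := by
  obtain ⟨Y, hYdense, -, hY⟩ := hf m hm
  obtain ⟨z, hz⟩ := hYdense.nonempty
  refine ⟨z, (hY z hz).mono ?_⟩
  rintro _ ⟨n, -, rfl⟩
  exact mem_range_self n

theorem separableSpace (hf : DeltaTransitive f) : TopologicalSpace.SeparableSpace X := by
  rcases isEmpty_or_nonempty X with _ | _
  · infer_instance
  obtain ⟨z, hz⟩ := hf.exists_denseRange_nComp le_rfl
  have horbit := (Function.surjective_eval (0 : Fin 1)).denseRange.comp hz (continuous_apply 0)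
  exact horbit.separableSpace continuous_of_discreteTopology

theorem exists_ge_nComp_mem [T1Space X] (hf : DeltaTransitive f) (r : ℕ) {m : ℕ}
    {U : Set X} (hU : IsOpen U) (hUne : U.Nonempty)
    {V : Set (Fin m → X)} (hV : IsOpen V) (hVne : V.Nonempty) :
    ∃ n ≥ r, ∃ x ∈ U, (fun i : Fin m => nComp f n ((i.1 + 1) * n) x) ∈ V := by
  obtain ⟨u, hu⟩ := hUne
  obtain ⟨v, hv⟩ := hVne
  have : Nonempty X := ⟨u⟩
  obtain ⟨z, hz⟩ := hf.exists_denseRange_nComp (m := m + 1 + r) (by lia)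
  have hUV : IsOpen {y : Fin (m + 1) → X | y 0 ∈ U ∧ (fun i : Fin m => y i.succ) ∈ V} :=
    (hU.preimage (continuous_apply 0)).inter (hV.preimage (by fun_prop))
  obtain ⟨n, hn, hnU, hnV⟩ :=
    exists_ge_castAdd_mem_of_denseRange hz hUV ⟨Fin.cons u v, hu, hv⟩
  refine ⟨n, hn, nComp f 0 n z, by simpa using hnU, ?_⟩
  have hshift (i : ℕ) :
      nComp f n ((i + 1) * n) (nComp f 0 n z) = nComp f 0 ((i + 1 + 1) * n) z := by
    rw [add_one_mul (i + 1), add_comm _ n, nComp_add, zero_add, Function.comp_apply]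
  simpa only [hshift, Fin.val_castAdd, Fin.val_succ] using hnV

end DeltaTransitive

theorem CollectiveConvergence.exists_iterate_mem {X : Type*} [MetricSpace X] {f : ℕ → X → X}
    {g : X → X} (hfg : CollectiveConvergence f g) (hf : DeltaTransitive f) {m : ℕ}
    {U : Set X} (hU : IsOpen U) (hUne : U.Nonempty)
    {V : Set (Fin m → X)} (hV : IsOpen V) (hVne : V.Nonempty) :
    ∃ n ≥ 1, ∃ x ∈ U, (fun i : Fin m => g^[(i.1 + 1) * n] x) ∈ V := by
  obtain ⟨v, hv⟩ := hVne
  obtain ⟨ε, hε, hball⟩ := Metric.isOpen_iff.1 hV v hv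
  obtain ⟨r₀, hr₀⟩ := hfg (ε / 2) (half_pos hε)
  obtain ⟨n, hn, x, hxU, hxv⟩ := hf.exists_ge_nComp_mem (max 1 r₀) hU hUne
    (Metric.isOpen_ball (x := v)) ⟨v, Metric.mem_ball_self (half_pos hε)⟩
  have hn1 : 1 ≤ n := (le_max_left _ _).trans hn
  have hclose : dist (fun i : Fin m => nComp f n ((i.1 + 1) * n) x)
      (fun i => g^[(i.1 + 1) * n] x) < ε / 2 :=
    (dist_pi_lt_iff (half_pos hε)).2 fun i =>
      hr₀ n ((le_max_right _ _).trans hn) _ (Nat.mul_pos i.1.succ_pos hn1) x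
  refine ⟨n, hn1, x, hxU, hball ?_⟩
  calc dist (fun i : Fin m => g^[(i.1 + 1) * n] x) v
      ≤ dist (fun i : Fin m => nComp f n ((i.1 + 1) * n) x) (fun i => g^[(i.1 + 1) * n] x) +
        dist (fun i : Fin m => nComp f n ((i.1 + 1) * n) x) v := dist_triangle_left _ _ _
    _ < ε / 2 + ε / 2 := add_lt_add hclose hxv
    _ = ε := add_halves ε

theorem deltaTransitive_limit_general {X : Type*} [MetricSpace X] [BaireSpace X]
    (f : ℕ → X → X) (flim : X → X) (hflim : Continuous flim)
    (hcoll : CollectiveConvergence f flim) (hdt : DeltaTransitive f) :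
    ADSDeltaTransitive flim := by
  intro m _
  have := hdt.separableSpace
  have := UniformSpace.secondCountable_of_separable X
  have hresidual : ∀ᶠ x in residual X,
      DenseRange fun (n : Ici (1 : ℕ)) (i : Fin m) => flim^[(i.1 + 1) * n.1] x := by
    refine eventually_residual_denseRange
      (fun n => continuous_pi fun i => hflim.iterate _) fun V hV hVne => ?_
    refine dense_iff_inter_open.2 fun U hU hUne => ?_
    obtain ⟨n, hn, x, hxU, hxV⟩ := hcoll.exists_iterate_mem hdt hU hUne hV hVne
    exact ⟨x, hxU, mem_iUnion.2 ⟨⟨n, hn⟩, hxV⟩⟩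
  obtain ⟨Y, hYGδ, hYdense, hY⟩ := eventually_residual.1 hresidual
  refine ⟨Y, hYdense, hYGδ, fun x hx => (hY x hx).mono ?_⟩
  rintro _ ⟨n, rfl⟩
  exact ⟨n, n.2, rfl⟩

/-- under collective convergence, if the NDS is feeble open and
Δ-transitive then the limit map is Δ-transitive. -/
theorem deltaTransitive_limit {X : Type*} [MetricSpace X] [CompactSpace X]
    (f : ℕ → X → X) (hf : ∀ n, Continuous (f n))
    (flim : X → X) (hflim : Continuous flim)
    (hcoll : CollectiveConvergence f flim)
    (hfo : FeebleOpen f)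
    (hdt : DeltaTransitive f) : ADSDeltaTransitive flim :=
  deltaTransitive_limit_general f flim hflim hcoll hdt
end

section
/- Let (X, f_{1,∞}) be an NDS. If f_{1,∞} is chain transitive and has the shadowing property, then f_{1,∞} is transitive. -/
open Set Filter

theorem ndsTransitive_iff_exists_dist_lt {X : Type*} [PseudoMetricSpace X] {f : ℕ → X → X} :
    NDSTransitive f ↔
      ∀ x y : X, ∀ ε > 0, ∃ n : ℕ, 1 ≤ n ∧ ∃ z, dist z x < ε ∧ dist (nComp f 0 n z) y < ε := by
  constructor
  · intro h x y ε hε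
    obtain ⟨n, hn, _, ⟨z, hzx, rfl⟩, hzy⟩ :=
      h (Metric.ball x ε) (Metric.ball y ε) Metric.isOpen_ball ⟨x, Metric.mem_ball_self hε⟩
        Metric.isOpen_ball ⟨y, Metric.mem_ball_self hε⟩
    exact ⟨n, hn, z, hzx, hzy⟩
  · rintro h U V hU ⟨x, hx⟩ hV ⟨y, hy⟩
    obtain ⟨εU, hεU, hballU⟩ := Metric.isOpen_iff.1 hU x hx
    obtain ⟨εV, hεV, hballV⟩ := Metric.isOpen_iff.1 hV y hy
    obtain ⟨n, hn, z, hzx, hzy⟩ := h x y (min εU εV) (lt_min hεU hεV)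
    have hzU : z ∈ U := hballU (hzx.trans_le (min_le_left _ _))
    have hzV : nComp f 0 n z ∈ V := hballV (hzy.trans_le (min_le_right _ _))
    exact ⟨n, hn, nComp f 0 n z, mem_image_of_mem _ hzU, hzV⟩

theorem chainTransitive_shadowing_transitive_general {X : Type*} [MetricSpace X]
    {f : ℕ → X → X} (hct : NDSChainTransitive f) (hsh : NDSShadowing f) : NDSTransitive f := by
  refine ndsTransitive_iff_exists_dist_lt.2 fun x y ε hε ↦ ?_
  obtain ⟨δ, hδ, hshadow⟩ := hsh ε hε
  obtain ⟨n, hn, c, rfl, rfl, hc⟩ := hct x y δ hδ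
  obtain ⟨z, hz⟩ := hshadow n c hc
  exact ⟨n, hn, z, hz 0 n.zero_le, hz n le_rfl⟩

/-- a chain transitive NDS with the shadowing property is transitive. -/
theorem chainTransitive_shadowing_transitive {X : Type*} [MetricSpace X] [CompactSpace X]
    (f : ℕ → X → X) (hf : ∀ n, Continuous (f n))
    (hct : NDSChainTransitive f) (hsh : NDSShadowing f) : NDSTransitive f :=
  chainTransitive_shadowing_transitive_general hct hsh
end
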